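/- If the coefficients α_1,…,α_N are all non-negative, then T · ∑ α_m α_n ≤ π² · I_A(T), where the sum runs over pairs m, n ≤ N with |log(m/n)| ≤ 2π/T. -/

import Mathlib

/-!
On `[0, 1]` the weight `w(s) = (1 - s)(1 + 2 cos 2πs)` satisfies `w ≤ 3`, so
`3 ∫_0^T |A(it)|² dt ≥ ∫_0^T w(t/T) |A(it)|² dt`.  Expanding the square into
`∑ α_m α_n cos(t log(m/n))`, the right-hand side becomes `T ∑ α_m α_n G(T log(m/n))`, where
`G(x) = k(x) + k(x - 2π) + k(x + 2π)` and `k(x) = ∫_0^1 (1 - s) cos(xs) ds` is half the Fejér kernel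
(`meanKernel_of_ne_zero`).  Since `k ≥ 0`, the terms with `|log(m/n)| > 2π/T` may be dropped, and
the theorem reduces to `G(x) ≥ 3/π²` for `|x| ≤ 2π` (`three_div_pi_sq_le`).  The two modulated
copies of `k` are there because `k` itself vanishes at `±2π`.
-/

open MeasureTheory intervalIntegral

/-- Half the Fejér kernel, as the cosine transform of the triangle weight `1 - s` on `[0, 1]`. -/
noncomputable def meanKernel (x : ℝ) : ℝ := ∫ s in (0 : ℝ)..1, (1 - s) * Real.cos (x * s)

lemma meanKernel_neg (x : ℝ) : meanKernel (-x) = meanKernel x := by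
  simp [meanKernel]

lemma meanKernel_of_ne_zero {x : ℝ} (hx : x ≠ 0) :
    meanKernel x = (1 - Real.cos x) / x ^ 2 := by
  have hderiv : ∀ s ∈ Set.uIcc (0 : ℝ) 1,
      HasDerivAt (fun s => (1 - s) * Real.sin (x * s) / x - Real.cos (x * s) / x ^ 2)
        ((1 - s) * Real.cos (x * s)) s := by
    intro s _
    have h0 : HasDerivAt (fun s : ℝ => x * s) x s := by
      simpa using (hasDerivAt_id s).const_mul x
    have h1 : HasDerivAt (fun s : ℝ => 1 - s) (-1) s := by
      simpa using (hasDerivAt_id s).const_sub 1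
    refine (((h1.mul h0.sin).div_const x).sub (h0.cos.div_const (x ^ 2))).congr_deriv ?_
    field_simp
    ring
  rw [meanKernel, integral_eq_sub_of_hasDerivAt hderiv
    ((by fun_prop : Continuous fun s : ℝ => (1 - s) * Real.cos (x * s)).intervalIntegrable _ _)]
  simp
  ring

/-- Integrated form of `cos y ≥ 1 - y² / 2`. -/
lemma meanKernel_ge (x : ℝ) : 1 / 2 - x ^ 2 / 24 ≤ meanKernel x := by
  have hint : ∫ s in (0 : ℝ)..1, (1 - s) * (1 - (x * s) ^ 2 / 2) = 1 / 2 - x ^ 2 / 24 := by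
    have hderiv : ∀ s ∈ Set.uIcc (0 : ℝ) 1,
        HasDerivAt (fun s : ℝ => s - s ^ 2 / 2 - x ^ 2 / 2 * (s ^ 3 / 3 - s ^ 4 / 4))
          ((1 - s) * (1 - (x * s) ^ 2 / 2)) s := by
      intro s _
      refine (((hasDerivAt_id s).sub ((hasDerivAt_pow 2 s).div_const 2)).sub
        ((((hasDerivAt_pow 3 s).div_const 3).sub
          ((hasDerivAt_pow 4 s).div_const 4)).const_mul (x ^ 2 / 2))).congr_deriv ?_
      push_cast
      ring
    rw [integral_eq_sub_of_hasDerivAt hderiv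
      ((by fun_prop : Continuous fun s : ℝ =>
        (1 - s) * (1 - (x * s) ^ 2 / 2)).intervalIntegrable _ _)]
    ring
  rw [← hint, meanKernel]
  refine integral_mono_on zero_le_one
    ((by fun_prop : Continuous fun s : ℝ =>
      (1 - s) * (1 - (x * s) ^ 2 / 2)).intervalIntegrable _ _)
    ((by fun_prop : Continuous fun s : ℝ =>
      (1 - s) * Real.cos (x * s)).intervalIntegrable _ _) fun s hs => ?_
  exact mul_le_mul_of_nonneg_left Real.one_sub_sq_div_two_le_cos (by linarith [hs.2])

lemma meanKernel_nonneg (x : ℝ) : 0 ≤ meanKernel x := by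
  rcases eq_or_ne x 0 with rfl | hx
  · have := meanKernel_ge 0
    norm_num at this
    linarith
  · rw [meanKernel_of_ne_zero hx]
    have := Real.cos_le_one x
    exact div_nonneg (sub_nonneg.2 this) (sq_nonneg x)

/-- For `y ≤ π - 1` the first term alone suffices; closer to `π`, both terms are needed. -/
lemma three_div_pi_sq_le_of_le_pi {y : ℝ} (hy : 0 ≤ y) (hyπ : y ≤ Real.pi) :
    3 / Real.pi ^ 2 ≤ meanKernel y + meanKernel (2 * Real.pi - y) := by
  have hp := Real.pi_gt_d2
  have hp' := Real.pi_lt_d2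
  rcases le_total y (Real.pi - 1) with h | h
  · have h1 := meanKernel_ge y
    have h2 := meanKernel_nonneg (2 * Real.pi - y)
    have h3 : 3 / Real.pi ^ 2 ≤ 0.305 := by
      rw [div_le_iff₀ (by positivity)]
      nlinarith
    have h4 : y ^ 2 ≤ 4.65 := by nlinarith
    linarith
  · obtain ⟨s, rfl⟩ : ∃ s, y = Real.pi - s := ⟨Real.pi - y, by ring⟩
    have hs0 : 0 ≤ s := by linarith
    have hs1 : s ≤ 1 := by linarith
    have ha : 0 < Real.pi - s := by linarith
    have hb : 0 < Real.pi + s := by linarith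
    have e : 2 * Real.pi - (Real.pi - s) = Real.pi + s := by ring
    rw [e, meanKernel_of_ne_zero ha.ne', meanKernel_of_ne_zero hb.ne', Real.cos_pi_sub,
      add_comm Real.pi s, Real.cos_add_pi, add_comm s Real.pi]
    have hc : 3 / 2 ≤ 1 - -Real.cos s := by
      have := Real.one_sub_sq_div_two_le_cos (x := s)
      nlinarith
    -- Convexity of `u ↦ 1/u²` at the points `π ± s`.
    have hconv : 2 / Real.pi ^ 2 ≤ 1 / (Real.pi - s) ^ 2 + 1 / (Real.pi + s) ^ 2 := by
      rw [div_add_div _ _ (by positivity) (by positivity),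
        div_le_div_iff₀ (by positivity) (by positivity)]
      have : 0 ≤ s ^ 2 * (6 * Real.pi ^ 2 - 2 * s ^ 2) := by
        apply mul_nonneg (sq_nonneg s)
        nlinarith
      linarith [show (1 * (Real.pi + s) ^ 2 + (Real.pi - s) ^ 2 * 1) * Real.pi ^ 2
        - 2 * ((Real.pi - s) ^ 2 * (Real.pi + s) ^ 2)
        = s ^ 2 * (6 * Real.pi ^ 2 - 2 * s ^ 2) by ring]
    calc 3 / Real.pi ^ 2 = 3 / 2 * (2 / Real.pi ^ 2) := by ring
      _ ≤ (1 - -Real.cos s) * (1 / (Real.pi - s) ^ 2 + 1 / (Real.pi + s) ^ 2) :=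
        mul_le_mul hc hconv (by positivity) (by linarith)
      _ = _ := by ring

lemma three_div_pi_sq_le {x : ℝ} (hx : |x| ≤ 2 * Real.pi) :
    3 / Real.pi ^ 2 ≤
      meanKernel x + meanKernel (x - 2 * Real.pi) + meanKernel (x + 2 * Real.pi) := by
  have key : ∀ y : ℝ, 0 ≤ y → y ≤ 2 * Real.pi →
      3 / Real.pi ^ 2 ≤ meanKernel y + meanKernel (2 * Real.pi - y) := by
    intro y h0 h1
    rcases le_total y Real.pi with h | h
    · exact three_div_pi_sq_le_of_le_pi h0 h
    · have := three_div_pi_sq_le_of_le_pi (y := 2 * Real.pi - y) (by linarith) (by linarith)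
      rw [sub_sub_cancel] at this
      linarith
  have hn1 := meanKernel_nonneg (x - 2 * Real.pi)
  have hn2 := meanKernel_nonneg (x + 2 * Real.pi)
  rcases abs_le.1 hx with ⟨h1, h2⟩
  rcases le_total 0 x with h | h
  · have := key x h h2
    rw [← meanKernel_neg (2 * Real.pi - x), neg_sub] at this
    linarith
  · have := key (-x) (by linarith) (by linarith)
    rw [meanKernel_neg, sub_neg_eq_add, add_comm (2 * Real.pi)] at this
    linarith

lemma integral_weight_mul_cos (x : ℝ) :
    ∫ s in (0 : ℝ)..1, (1 - s) * (1 + 2 * Real.cos (2 * Real.pi * s)) * Real.cos (x * s) =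
      meanKernel x + meanKernel (x - 2 * Real.pi) + meanKernel (x + 2 * Real.pi) := by
  have hI : ∀ y : ℝ, IntervalIntegrable (fun s : ℝ => (1 - s) * Real.cos (y * s)) volume 0 1 :=
    fun y => (by fun_prop : Continuous fun s : ℝ => (1 - s) * Real.cos (y * s)).intervalIntegrable
      _ _
  unfold meanKernel
  rw [← integral_add (hI _) (hI _), ← integral_add ((hI _).add (hI _)) (hI _)]
  refine integral_congr fun s _ => ?_
  simp only [sub_mul x, add_mul x, Real.cos_sub, Real.cos_add]
  ring

/-- The previous integral, rescaled from `[0, 1]` to `[0, T]`. -/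
lemma integral_weight_mul_cos_scaled {T : ℝ} (hT : 0 < T) (x : ℝ) :
    ∫ t in (0 : ℝ)..T,
        (1 - t / T) * (1 + 2 * Real.cos (2 * Real.pi * (t / T))) * Real.cos (t * x) =
      T * (meanKernel (T * x) + meanKernel (T * x - 2 * Real.pi)
        + meanKernel (T * x + 2 * Real.pi)) := by
  rw [← integral_weight_mul_cos]
  have := intervalIntegral.integral_comp_div (a := 0) (b := T)
    (fun s : ℝ => (1 - s) * (1 + 2 * Real.cos (2 * Real.pi * s)) * Real.cos (T * x * s)) hT.ne'
  rw [zero_div, div_self hT.ne', smul_eq_mul] at this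
  rw [← this]
  refine integral_congr fun t _ => ?_
  have : T * x * (t / T) = t * x := by field_simp
  simp only [this]

lemma norm_sq_dirichlet (N : ℕ) (α : ℕ → ℝ) (t : ℝ) :
    ‖∑ n ∈ Finset.Icc 1 N, (α n : ℂ) * (n : ℂ) ^ (-(Complex.I * (t : ℂ)))‖ ^ 2 =
      ∑ m ∈ Finset.Icc 1 N, ∑ n ∈ Finset.Icc 1 N,
        α m * α n * Real.cos (t * Real.log ((m : ℝ) / (n : ℝ))) := by
  have hterm : ∀ n ∈ Finset.Icc 1 N, (α n : ℂ) * (n : ℂ) ^ (-(Complex.I * (t : ℂ))) =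
      ((α n * Real.cos (t * Real.log n) : ℝ) : ℂ)
        + ((-(α n * Real.sin (t * Real.log n)) : ℝ) : ℂ) * Complex.I := by
    intro n hn
    have hn0 : (n : ℂ) ≠ 0 := by
      have := (Finset.mem_Icc.1 hn).1
      exact_mod_cast (by omega : n ≠ 0)
    rw [Complex.cpow_def_of_ne_zero hn0, Complex.natCast_log.symm,
      show ((Real.log n : ℝ) : ℂ) * -(Complex.I * (t : ℂ))
        = ((-(t * Real.log n) : ℝ) : ℂ) * Complex.I by push_cast; ring,
      Complex.exp_mul_I, ← Complex.ofReal_cos, ← Complex.ofReal_sin, Real.cos_neg, Real.sin_neg]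
    push_cast
    ring
  rw [Finset.sum_congr rfl hterm, Finset.sum_add_distrib, ← Finset.sum_mul,
    ← Complex.ofReal_sum, ← Complex.ofReal_sum, ← Complex.normSq_eq_norm_sq,
    Complex.normSq_add_mul_I, Finset.sum_neg_distrib, neg_sq, sq, sq, Finset.sum_mul_sum,
    Finset.sum_mul_sum, ← Finset.sum_add_distrib]
  refine Finset.sum_congr rfl fun m hm => ?_
  rw [← Finset.sum_add_distrib]
  refine Finset.sum_congr rfl fun n hn => ?_
  have hm0 : (m : ℝ) ≠ 0 := by
    have := (Finset.mem_Icc.1 hm).1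
    exact_mod_cast (by omega : m ≠ 0)
  have hn0 : (n : ℝ) ≠ 0 := by
    have := (Finset.mem_Icc.1 hn).1
    exact_mod_cast (by omega : n ≠ 0)
  rw [Real.log_div hm0 hn0, mul_sub, Real.cos_sub]
  ring

theorem dirichlet_mean_value_lower (T : ℝ) (hT : 0 < T) (N : ℕ) (hN : 0 < N)
    (α : ℕ → ℝ) (hα : ∀ n ∈ Finset.Icc 1 N, 0 ≤ α n) :
    T * (∑ m ∈ Finset.Icc 1 N, ∑ n ∈ Finset.Icc 1 N,
        (if |Real.log ((m : ℝ) / (n : ℝ))| ≤ 2 * Real.pi / T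
          then α m * α n else 0)) ≤
      Real.pi ^ 2 *
        ∫ t in (0 : ℝ)..T,
          ‖∑ n ∈ Finset.Icc 1 N, (α n : ℂ) * (n : ℂ) ^ (-(Complex.I * (t : ℂ)))‖ ^ 2 := by
  set F : ℝ → ℝ := fun t =>
    ‖∑ n ∈ Finset.Icc 1 N, (α n : ℂ) * (n : ℂ) ^ (-(Complex.I * (t : ℂ)))‖ ^ 2 with hF
  have hFeq : F = fun t => ∑ m ∈ Finset.Icc 1 N, ∑ n ∈ Finset.Icc 1 N,
      α m * α n * Real.cos (t * Real.log ((m : ℝ) / (n : ℝ))) :=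
    funext fun t => norm_sq_dirichlet N α t
  have hFc : Continuous F := by rw [hFeq]; fun_prop
  set w : ℝ → ℝ := fun t => (1 - t / T) * (1 + 2 * Real.cos (2 * Real.pi * (t / T))) with hw
  have hwc : Continuous w := by rw [hw]; fun_prop
  have hw3 : ∀ t ∈ Set.Icc 0 T, w t ≤ 3 := by
    intro t ht
    have h1 : 0 ≤ t / T := div_nonneg ht.1 hT.le
    have h2 : t / T ≤ 1 := (div_le_one hT).2 ht.2
    have h3 := Real.cos_le_one (2 * Real.pi * (t / T))
    simp only [hw]
    nlinarith
  have hupper : ∫ t in (0 : ℝ)..T, w t * F t ≤ 3 * ∫ t in (0 : ℝ)..T, F t := by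
    rw [← intervalIntegral.integral_const_mul]
    refine integral_mono_on hT.le ((hwc.mul hFc).intervalIntegrable _ _)
      ((continuous_const.mul hFc).intervalIntegrable _ _) fun t ht => ?_
    exact mul_le_mul_of_nonneg_right (hw3 t ht) (by simp only [hF]; positivity)
  have hexpand : ∫ t in (0 : ℝ)..T, w t * F t =
      ∑ m ∈ Finset.Icc 1 N, ∑ n ∈ Finset.Icc 1 N, α m * α n *
        ∫ t in (0 : ℝ)..T, w t * Real.cos (t * Real.log ((m : ℝ) / (n : ℝ))) := by
    have hc : ∀ m n : ℕ, Continuous fun t : ℝ =>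
        α m * α n * (w t * Real.cos (t * Real.log ((m : ℝ) / (n : ℝ)))) := by
      intro m n; fun_prop
    simp_rw [← intervalIntegral.integral_const_mul]
    have : (fun t => w t * F t) = fun t => ∑ m ∈ Finset.Icc 1 N, ∑ n ∈ Finset.Icc 1 N,
        α m * α n * (w t * Real.cos (t * Real.log ((m : ℝ) / (n : ℝ)))) := by
      funext t
      rw [hFeq]
      simp only [Finset.mul_sum]
      exact Finset.sum_congr rfl fun m _ => Finset.sum_congr rfl fun n _ => by ring
    rw [this, intervalIntegral.integral_finsetSum fun m _ =>
      (continuous_finsetSum _ fun n _ => hc m n).intervalIntegrable _ _]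
    exact Finset.sum_congr rfl fun m _ => intervalIntegral.integral_finsetSum fun n _ =>
      (hc m n).intervalIntegrable _ _
  have hlower : T * (3 / Real.pi ^ 2) * (∑ m ∈ Finset.Icc 1 N, ∑ n ∈ Finset.Icc 1 N,
      (if |Real.log ((m : ℝ) / (n : ℝ))| ≤ 2 * Real.pi / T then α m * α n else 0)) ≤
      ∫ t in (0 : ℝ)..T, w t * F t := by
    rw [hexpand]
    simp only [Finset.mul_sum]
    refine Finset.sum_le_sum fun m hm => Finset.sum_le_sum fun n hn => ?_
    have hmn : 0 ≤ α m * α n := mul_nonneg (hα m hm) (hα n hn)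
    simp only [hw]
    rw [integral_weight_mul_cos_scaled hT]
    set x := Real.log ((m : ℝ) / (n : ℝ))
    split_ifs with h
    · have hx : |T * x| ≤ 2 * Real.pi := by
        rw [abs_mul, abs_of_pos hT, mul_comm]
        exact (le_div_iff₀ hT).1 h
      rw [mul_comm]
      exact mul_le_mul_of_nonneg_left
        (mul_le_mul_of_nonneg_left (three_div_pi_sq_le hx) hT.le) hmn
    · rw [mul_zero]
      have h1 := meanKernel_nonneg (T * x)
      have h2 := meanKernel_nonneg (T * x - 2 * Real.pi)
      have h3 := meanKernel_nonneg (T * x + 2 * Real.pi)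
      positivity
  have hfin := hlower.trans hupper
  set S := ∑ m ∈ Finset.Icc 1 N, ∑ n ∈ Finset.Icc 1 N,
      (if |Real.log ((m : ℝ) / (n : ℝ))| ≤ 2 * Real.pi / T then α m * α n else 0)
  have hπ : 0 < Real.pi ^ 2 := by positivity
  have e : T * S = Real.pi ^ 2 / 3 * (T * (3 / Real.pi ^ 2) * S) := by field_simp
  rw [e]
  calc _ ≤ Real.pi ^ 2 / 3 * (3 * ∫ t in (0 : ℝ)..T, F t) :=
        mul_le_mul_of_nonneg_left hfin (by positivity)
    _ = _ := by ring
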